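/- Let l ≥ 1, Y = {−1,+1}^l with n = 2^l, p a conditional label distribution on Y, L̄ : Y × Y → [0,1] a multi-label loss, c_{y'} = ∑_{y∈Y} p(y)·L̄(y', y), and q ∈ (0,1). For a positive probability vector s on Y define the multi-label generalized cross-entropy conditional error G_q(s) = (1/q)·∑_{y'∈Y} (1 − c_{y'})·(1 − s_{y'}^q). If ĥ ∈ Y satisfies s_{ĥ} = max_{y'∈Y} s_{y'}, then c_{ĥ} − min_{y'∈Y} c_{y'} ≤ 2·√( n^q · ( G_q(s) − inf_{s'} G_q(s') ) ), where the infimum is over all positive probability vectors s' on Y. -/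

import Mathlib

noncomputable section
open Real

/-- Conditional cost `c_{y'} = ∑_y p(y) L̄(y', y)` of predicting the label vector `y'`. -/
def condCost {l : ℕ} (p : (Fin l → Bool) → ℝ)
    (L : (Fin l → Bool) → (Fin l → Bool) → ℝ) (y' : Fin l → Bool) : ℝ :=
  ∑ y, p y * L y' y

/-- The set of positive probability vectors on `Y = {−1,+1}^l`. -/
def probVecs (l : ℕ) : Set ((Fin l → Bool) → ℝ) :=
  {s | (∀ y', 0 < s y') ∧ ∑ y', s y' = 1}

/-- Multi-label generalized cross-entropy conditional error
`G_q(s) = (1/q) ∑_{y'} (1 − c_{y'}) (1 − s_{y'}^q)`. -/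
def Ggce {l : ℕ} (q : ℝ) (c : (Fin l → Bool) → ℝ) (s : (Fin l → Bool) → ℝ) : ℝ :=
  (1 / q) * ∑ y', (1 - c y') * (1 - s y' ^ q)

/-!
Let `h` maximize `s`, let `m` minimize the cost `c`, and put `d = (c h - c m) / 2`. Moving the mass
`d * s h` from `h` to `m` keeps `s` a positive probability vector and lowers the error by at least
`s h ^ q * d ^ 2`. Indeed `s m ≤ s h` and `x ↦ x ^ q` is concave, so the gain is smallest when
`s m = s h`; then `s h ^ q` factors out, and `x ^ q - 1 ≥ q * log x` leaves the inequality
`d ^ 2 ≤ (1 - c m) * log (1 + d) + (1 - c h) * log (1 - d)`.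
The largest of `n` scores is at least `1 / n`, so `d ^ 2` is at most `n ^ q` times the regret.
-/

section RealInequalities

lemma concaveOn_add_le_add_of_mem_segment {𝕜 E β : Type*} [Semiring 𝕜] [PartialOrder 𝕜]
    [AddCommGroup E] [Module 𝕜 E] [AddCommMonoid β] [PartialOrder β] [IsOrderedAddMonoid β]
    [Module 𝕜 β] {S : Set E} {f : E → β} (hf : ConcaveOn 𝕜 S f) {x y z w : E} (hx : x ∈ S)
    (hz : z ∈ S) (hy : y ∈ segment 𝕜 x z) (hsum : y + w = x + z) : f x + f z ≤ f y + f w := by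
  obtain ⟨a, b, ha, hb, hab, rfl⟩ := hy
  have hw : w = b • x + a • z := by
    refine add_left_cancel (hsum.trans ?_)
    calc x + z = (a + b) • x + (a + b) • z := by rw [hab, one_smul, one_smul]
      _ = a • x + b • z + (b • x + a • z) := by rw [add_smul, add_smul]; abel
  calc f x + f z = (a + b) • f x + (a + b) • f z := by rw [hab, one_smul, one_smul]
    _ = (a • f x + b • f z) + (b • f x + a • f z) := by rw [add_smul, add_smul]; abel
    _ ≤ f (a • x + b • z) + f w := by
      rw [hw]
      exact add_le_add (hf.2 hx hz ha hb hab) (hf.2 hx hz hb ha (by rwa [add_comm]))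

lemma rpow_add_sub_rpow_anti {q u v δ : ℝ} (hq₀ : 0 ≤ q) (hq₁ : q ≤ 1) (hv : 0 ≤ v)
    (hvu : v ≤ u) (hδ : 0 ≤ δ) : (u + δ) ^ q - u ^ q ≤ (v + δ) ^ q - v ^ q := by
  have hvuδ : v ≤ u + δ := by linarith
  have hu : u ∈ segment ℝ v (u + δ) := by
    rw [segment_eq_Icc hvuδ]
    exact ⟨hvu, by linarith⟩
  have := concaveOn_add_le_add_of_mem_segment (concaveOn_rpow hq₀ hq₁) (w := v + δ)
    (Set.mem_Ici.2 hv) (Set.mem_Ici.2 (hv.trans hvuδ)) hu (by ring)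
  linarith

lemma sub_sq_div_two_le_log_one_add {x : ℝ} (hx : 0 ≤ x) : x - x ^ 2 / 2 ≤ log (1 + x) := by
  refine le_trans ?_ (le_log_one_add_of_nonneg hx)
  rw [le_div_iff₀ (by linarith)]
  nlinarith [pow_nonneg hx 3]

lemma sq_le_mul_log_one_add_add_mul_log_one_sub {b d : ℝ} (hb : 0 ≤ b) (hd : 0 ≤ d)
    (hbd : b + 2 * d ≤ 1) : d ^ 2 ≤ (b + 2 * d) * log (1 + d) + b * log (1 - d) := by
  have hpos : 0 < 1 - d ^ 2 := by nlinarith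
  have hlog : -(d ^ 2 / (1 - d ^ 2)) ≤ log (1 - d ^ 2) := by
    convert one_sub_inv_le_log_of_pos hpos using 1
    field_simp
    ring
  have hb_div : b / (1 - d ^ 2) ≤ 1 - d := by
    rw [div_le_iff₀ hpos]
    nlinarith [pow_nonneg hd 3]
  calc d ^ 2 = -((1 - d) * d ^ 2) + 2 * d * (d - d ^ 2 / 2) := by ring
    _ ≤ -(b / (1 - d ^ 2) * d ^ 2) + 2 * d * log (1 + d) := by
      gcongr
      exact sub_sq_div_two_le_log_one_add hd
    _ = b * -(d ^ 2 / (1 - d ^ 2)) + 2 * d * log (1 + d) := by ring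
    _ ≤ b * log (1 - d ^ 2) + 2 * d * log (1 + d) := by gcongr
    _ = (b + 2 * d) * log (1 + d) + b * log (1 - d) := by
      rw [show 1 - d ^ 2 = (1 + d) * (1 - d) by ring, log_mul (by linarith) (by linarith)]
      ring

lemma mul_log_le_rpow_sub_one {x : ℝ} (hx : 0 < x) (q : ℝ) : q * log x ≤ x ^ q - 1 := by
  rw [← log_rpow hx]
  exact log_le_sub_one_of_pos (rpow_pos_of_pos hx q)

lemma mul_sq_le_mul_rpow_one_add_add_mul_rpow_one_sub {q b d : ℝ} (hq : 0 ≤ q) (hb : 0 ≤ b)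
    (hd : 0 ≤ d) (hbd : b + 2 * d ≤ 1) :
    q * d ^ 2 ≤ (b + 2 * d) * ((1 + d) ^ q - 1) + b * ((1 - d) ^ q - 1) :=
  calc q * d ^ 2 ≤ q * ((b + 2 * d) * log (1 + d) + b * log (1 - d)) := by
        gcongr
        exact sq_le_mul_log_one_add_add_mul_log_one_sub hb hd hbd
    _ = (b + 2 * d) * (q * log (1 + d)) + b * (q * log (1 - d)) := by ring
    _ ≤ (b + 2 * d) * ((1 + d) ^ q - 1) + b * ((1 - d) ^ q - 1) := by
      gcongr <;> exact mul_log_le_rpow_sub_one (by linarith) q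

lemma rpow_mul_sq_le_mul_rpow_sub_add_mul_rpow_sub {q b d u v : ℝ} (hq₀ : 0 ≤ q) (hq₁ : q ≤ 1)
    (hb : 0 ≤ b) (hd : 0 ≤ d) (hbd : b + 2 * d ≤ 1) (hv : 0 ≤ v) (hvu : v ≤ u) :
    u ^ q * (q * d ^ 2) ≤
      (b + 2 * d) * ((v + d * u) ^ q - v ^ q) + b * ((u - d * u) ^ q - u ^ q) := by
  have hu : 0 ≤ u := hv.trans hvu
  calc u ^ q * (q * d ^ 2)
      ≤ u ^ q * ((b + 2 * d) * ((1 + d) ^ q - 1) + b * ((1 - d) ^ q - 1)) := by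
        gcongr
        exact mul_sq_le_mul_rpow_one_add_add_mul_rpow_one_sub hq₀ hb hd hbd
    _ = (b + 2 * d) * ((u + d * u) ^ q - u ^ q) + b * ((u - d * u) ^ q - u ^ q) := by
      rw [show u + d * u = u * (1 + d) by ring, show u - d * u = u * (1 - d) by ring,
        mul_rpow hu (by linarith), mul_rpow hu (by linarith)]
      ring
    _ ≤ (b + 2 * d) * ((v + d * u) ^ q - v ^ q) + b * ((u - d * u) ^ q - u ^ q) := by
      gcongr (b + 2 * d) * ?_ + _
      exact rpow_add_sub_rpow_anti hq₀ hq₁ hv hvu (by positivity)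

end RealInequalities

section PosSimplex

variable {ι : Type*} [Fintype ι] {s : ι → ℝ} {h m : ι} {δ : ℝ}

/-- The positive probability vectors on a finite type, i.e. the relative interior of
`stdSimplex ℝ ι`; the softmax scores range over it. -/
def posSimplex (ι : Type*) [Fintype ι] : Set (ι → ℝ) :=
  {s | (∀ i, 0 < s i) ∧ ∑ i, s i = 1}

lemma posSimplex_subset_stdSimplex : posSimplex ι ⊆ stdSimplex ℝ ι :=
  fun _ hs ↦ ⟨fun i ↦ (hs.1 i).le, hs.2⟩

lemma one_le_card_mul_of_forall_le (hs : ∑ i, s i = 1) (hmax : ∀ i, s i ≤ s h) :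
    1 ≤ Fintype.card ι * s h := by
  simpa only [hs, nsmul_eq_mul, Finset.card_univ] using
    Finset.univ.sum_le_card_nsmul s (s h) fun i _ ↦ hmax i

variable [DecidableEq ι]

/-- The vector `s` after moving mass `δ` from the coordinate `h` to the coordinate `m`. -/
def transferMass (s : ι → ℝ) (h m : ι) (δ : ℝ) : ι → ℝ :=
  s + Pi.single m δ - Pi.single h δ

lemma sum_transferMass_sub_sum {M : Type*} [AddCommGroup M] (F : ι → ℝ → M) (s : ι → ℝ)
    (hne : h ≠ m) (δ : ℝ) :
    ∑ i, F i (transferMass s h m δ i) - ∑ i, F i (s i) =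
      (F h (s h - δ) - F h (s h)) + (F m (s m + δ) - F m (s m)) := by
  rw [← Finset.sum_sub_distrib, Fintype.sum_eq_add h m hne]
  · simp [transferMass, hne, hne.symm]
  · rintro i ⟨hih, him⟩
    simp [transferMass, hih, him]

lemma transferMass_mem_posSimplex (hs : s ∈ posSimplex ι) (hδ₀ : 0 ≤ δ) (hδ : δ < s h) :
    transferMass s h m δ ∈ posSimplex ι := by
  refine ⟨fun i ↦ ?_, ?_⟩
  · have hm_nonneg : 0 ≤ (Pi.single m δ : ι → ℝ) i :=
      (Pi.single_nonneg.2 hδ₀ : 0 ≤ (Pi.single m δ : ι → ℝ)) i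
    have hh_lt : (Pi.single h δ : ι → ℝ) i < s i := by
      rcases eq_or_ne i h with rfl | hih
      · rwa [Pi.single_eq_same]
      · rw [Pi.single_eq_of_ne hih]
        exact hs.1 i
    simp only [transferMass, Pi.add_apply, Pi.sub_apply]
    linarith
  · simp [transferMass, Finset.sum_add_distrib, Finset.sum_sub_distrib, hs.2]

end PosSimplex

section GceError

variable {ι : Type*} [Fintype ι] {c s : ι → ℝ} {q : ℝ} {h m : ι}

/-- The generalized cross-entropy conditional error with costs `c` on an arbitrary finite type of
labels; `Ggce` is the case of the label type `Fin l → Bool`. -/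
def gceError (q : ℝ) (c s : ι → ℝ) : ℝ :=
  (1 / q) * ∑ i, (1 - c i) * (1 - s i ^ q)

lemma gceError_nonneg (hq : 0 ≤ q) (hc : ∀ i, c i ≤ 1) (hs : s ∈ stdSimplex ℝ ι) :
    0 ≤ gceError q c s := by
  refine mul_nonneg (by positivity) (Finset.sum_nonneg fun i _ ↦ mul_nonneg ?_ ?_)
  · exact sub_nonneg.2 (hc i)
  · have hsi := mem_Icc_of_mem_stdSimplex hs i
    exact sub_nonneg.2 (rpow_le_one hsi.1 hsi.2 hq)

lemma bddBelow_gceError_image_posSimplex (hq : 0 ≤ q) (hc : ∀ i, c i ≤ 1) :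
    BddBelow (gceError q c '' posSimplex ι) :=
  ⟨0, Set.forall_mem_image.2 fun _ hs ↦
    gceError_nonneg hq hc (posSimplex_subset_stdSimplex hs)⟩

lemma gceError_sub_gceError_transferMass [DecidableEq ι] (q : ℝ) (c s : ι → ℝ) (hne : h ≠ m)
    (δ : ℝ) :
    gceError q c s - gceError q c (transferMass s h m δ) =
      (1 / q) * ((1 - c m) * ((s m + δ) ^ q - s m ^ q) +
        (1 - c h) * ((s h - δ) ^ q - s h ^ q)) := by
  have hsum := sum_transferMass_sub_sum (fun i x ↦ (1 - c i) * (1 - x ^ q)) s hne δ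
  simp only [gceError]
  linear_combination (-(1 / q)) * hsum

lemma rpow_mul_sq_le_gceError_sub_gceError_transferMass [DecidableEq ι] (hq : q ∈ Set.Ioc 0 1)
    (hm : 0 ≤ s m) (hsm : s m ≤ s h) (hch : c h ≤ 1) (hcm : 0 ≤ c m) (hlt : c m < c h) :
    s h ^ q * ((c h - c m) / 2) ^ 2 ≤
      gceError q c s - gceError q c (transferMass s h m ((c h - c m) / 2 * s h)) := by
  have hne : h ≠ m := by
    rintro rfl
    exact hlt.false
  have hgain := rpow_mul_sq_le_mul_rpow_sub_add_mul_rpow_sub (b := 1 - c h)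
    (d := (c h - c m) / 2) hq.1.le hq.2 (by linarith) (by linarith) (by linarith) hm hsm
  rw [show 1 - c h + 2 * ((c h - c m) / 2) = 1 - c m by ring] at hgain
  rw [gceError_sub_gceError_transferMass q c s hne, one_div_mul_eq_div, le_div_iff₀ hq.1]
  linarith

lemma rpow_mul_sq_le_gceError_sub_sInf (hq : q ∈ Set.Ioc 0 1) (hc : ∀ i, c i ∈ Set.Icc 0 1)
    (hs : s ∈ posSimplex ι) (hsm : s m ≤ s h) (hlt : c m < c h) :
    s h ^ q * ((c h - c m) / 2) ^ 2 ≤ gceError q c s - sInf (gceError q c '' posSimplex ι) := by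
  classical
  have hd_lt : (c h - c m) / 2 < 1 := by linarith [(hc h).2, (hc m).1]
  have hmem : transferMass s h m ((c h - c m) / 2 * s h) ∈ posSimplex ι :=
    transferMass_mem_posSimplex hs (mul_nonneg (by linarith) (hs.1 h).le)
      (mul_lt_of_lt_one_left (hs.1 h) hd_lt)
  refine (rpow_mul_sq_le_gceError_sub_gceError_transferMass hq (hs.1 m).le hsm (hc h).2 (hc m).1
    hlt).trans (sub_le_sub_left ?_ _)
  exact csInf_le (bddBelow_gceError_image_posSimplex hq.1.le fun i ↦ (hc i).2)
    (Set.mem_image_of_mem _ hmem)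

theorem comp_bound_generalized_cross_entropy_general (hq : q ∈ Set.Ioc 0 1)
    (hc : ∀ i, c i ∈ Set.Icc 0 1) (hs : s ∈ posSimplex ι) (hmax : ∀ i, s i ≤ s h) :
    c h - ⨅ i, c i ≤ 2 * √((Fintype.card ι : ℝ) ^ q *
      (gceError q c s - sInf (gceError q c '' posSimplex ι))) := by
  have : Nonempty ι := ⟨h⟩
  obtain ⟨m, hm⟩ := exists_eq_ciInf_of_finite (f := c)
  rw [← hm]
  rcases le_or_gt (c h) (c m) with hle | hlt
  · exact (sub_nonpos.2 hle).trans (by positivity)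
  have hcard : 1 ≤ (Fintype.card ι : ℝ) ^ q * s h ^ q := by
    rw [← mul_rpow (Nat.cast_nonneg _) (hs.1 h).le]
    exact one_le_rpow (one_le_card_mul_of_forall_le hs.2 hmax) hq.1.le
  suffices (c h - c m) / 2 ≤ √((Fintype.card ι : ℝ) ^ q *
      (gceError q c s - sInf (gceError q c '' posSimplex ι))) by linarith
  apply le_sqrt_of_sq_le
  calc ((c h - c m) / 2) ^ 2
      ≤ (Fintype.card ι : ℝ) ^ q * s h ^ q * ((c h - c m) / 2) ^ 2 :=
        le_mul_of_one_le_left (sq_nonneg _) hcard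
    _ = (Fintype.card ι : ℝ) ^ q * (s h ^ q * ((c h - c m) / 2) ^ 2) := mul_assoc ..
    _ ≤ _ := by
      gcongr
      exact rpow_mul_sq_le_gceError_sub_sInf hq hc hs (hmax m) hlt

end GceError

lemma condCost_mem_Icc {l : ℕ} {p : (Fin l → Bool) → ℝ} (hp : p ∈ stdSimplex ℝ (Fin l → Bool))
    {L : (Fin l → Bool) → (Fin l → Bool) → ℝ} {a b : ℝ} {y' : Fin l → Bool}
    (hL : ∀ y, L y' y ∈ Set.Icc a b) : condCost p L y' ∈ Set.Icc a b :=
  (convex_Icc a b).sum_mem (fun y _ ↦ hp.1 y) hp.2 fun y _ ↦ hL y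

theorem comp_bound_generalized_cross_entropy (l : ℕ) (hl : 1 ≤ l)
    (p : (Fin l → Bool) → ℝ) (hp0 : ∀ y, 0 ≤ p y) (hp1 : ∑ y, p y = 1)
    (L : (Fin l → Bool) → (Fin l → Bool) → ℝ)
    (hL : ∀ y' y, L y' y ∈ Set.Icc (0 : ℝ) 1)
    (q : ℝ) (hq : q ∈ Set.Ioo (0 : ℝ) 1)
    (s : (Fin l → Bool) → ℝ) (hs : s ∈ probVecs l)
    (hhat : Fin l → Bool) (hmax : ∀ y', s y' ≤ s hhat) :
    condCost p L hhat - ⨅ y' : Fin l → Bool, condCost p L y'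
      ≤ 2 * Real.sqrt (((2 : ℝ) ^ l) ^ q * (Ggce q (condCost p L) s
          - sInf ((fun s' => Ggce q (condCost p L) s') '' probVecs l))) := by
  have hc (y' : Fin l → Bool) : condCost p L y' ∈ Set.Icc 0 1 :=
    condCost_mem_Icc ⟨hp0, hp1⟩ (hL y')
  have hcard : (Fintype.card (Fin l → Bool) : ℝ) = 2 ^ l := by simp
  rw [← hcard]
  exact comp_bound_generalized_cross_entropy_general (Set.Ioo_subset_Ioc_self hq) hc hs hmax
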